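/- arXiv:1607.04848 — 2 statements merged into one kernel-verified Lean document; each statement's English description precedes it below -/
import Mathlib

section
/- Suppose F ∈ D(Λ), i.e. its quantile function Q satisfies de Haan's criterion. Then for each fixed β > 0, c(s, β)/c(s) → 1/β as s ↓ 0. -/
open MeasureTheory Filter Set

noncomputable section

/-- The distribution function of a measure on `ℝ`. -/
def distFun (μ : Measure ℝ) : ℝ → ℝ := fun x => (μ (Set.Iic x)).toReal

/-- The quantile (left-continuous inverse) function of a distribution function. -/
def quantileFun (F : ℝ → ℝ) : ℝ → ℝ := fun s => sInf {x : ℝ | s ≤ F x}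

/-- de Haan's criterion for the Gumbel domain of attraction, in terms of the
quantile function `Q`. -/
def DeHaanGumbel (Q : ℝ → ℝ) : Prop :=
  ∀ x y z w : ℝ, 0 < x → 0 < y → 0 < z → 0 < w → y ≠ w →
    Tendsto (fun s : ℝ => (Q (1 - s * x) - Q (1 - s * z)) / (Q (1 - s * y) - Q (1 - s * w)))
      (nhdsWithin 0 (Set.Ioi 0))
      (nhds ((Real.log x - Real.log z) / (Real.log y - Real.log w)))

/-- The Lebesgue–Stieltjes measure `dQ` on `(0,1)` associated with the quantile function of
`F`: it coincides with the pushforward of Lebesgue measure under `F`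
(for an interval `(a,b] ⊆ (0,1)` it has mass `Q(b+) - Q(a+)`). -/
def dQ (μ : Measure ℝ) : Measure ℝ := Measure.map (distFun μ) volume

/-- `c(s,β) = s^{-β} ∫_{(1-s,1)} (1-u)^β dQ(u)`. -/
def cBeta (μ : Measure ℝ) (s β : ℝ) : ℝ :=
  s ^ (-β) * ∫ u in Set.Ioo (1 - s) 1, (1 - u) ^ β ∂(dQ μ)

/-- `c(s) = c(s,1) = s⁻¹ ∫_{(1-s,1)} (1-u) dQ(u)`. -/
def cFun (μ : Measure ℝ) (s : ℝ) : ℝ := cBeta μ s 1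

/-- `σ²(s) = ∫_{(1-s,1)} ∫_{(1-s,1)} (min(u,v) - uv) dQ(u) dQ(v)`. -/
def sigmaSq (μ : Measure ℝ) (s : ℝ) : ℝ :=
  ∫ v in Set.Ioo (1 - s) 1, (∫ u in Set.Ioo (1 - s) 1, (min u v - u * v) ∂(dQ μ)) ∂(dQ μ)

/-- A function is slowly varying at zero if `L(λ s)/L(s) → 1` as `s ↓ 0` for every `λ > 0`. -/
def SlowlyVaryingAtZero (L : ℝ → ℝ) : Prop :=
  ∀ lam : ℝ, 0 < lam →
    Tendsto (fun s : ℝ => L (lam * s) / L s) (nhdsWithin 0 (Set.Ioi 0)) (nhds 1)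

/-- Condition (K) on the sequence of integers `k n`. -/
def CondK (k : ℕ → ℕ) : Prop :=
  (∀ n : ℕ, 1 ≤ k n ∧ k n ≤ n) ∧ Tendsto k atTop atTop ∧
    Tendsto (fun n : ℕ => (k n : ℝ) / (n : ℝ)) atTop (nhds 0)

open scoped Topology

lemma aux_distFun_eq (μ : Measure ℝ) [IsProbabilityMeasure μ] (x : ℝ) :
    distFun μ x = ProbabilityTheory.cdf μ x := by
  rw [ProbabilityTheory.cdf_eq_real]; rfl

lemma aux_mono (μ : Measure ℝ) [IsProbabilityMeasure μ] : Monotone (distFun μ) := by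
  intro x y h
  rw [aux_distFun_eq, aux_distFun_eq]
  exact ProbabilityTheory.monotone_cdf μ h

lemma aux_galois (μ : Measure ℝ) [IsProbabilityMeasure μ] {a : ℝ} (h0 : 0 < a) (h1 : a < 1)
    (x : ℝ) : a ≤ distFun μ x ↔ quantileFun (distFun μ) a ≤ x := by
  have hbdd : BddBelow {x : ℝ | a ≤ distFun μ x} := by
    have := (ProbabilityTheory.tendsto_cdf_atBot μ).eventually (gt_mem_nhds h0)
    obtain ⟨b, hb⟩ := this.exists
    refine ⟨b, fun y hy => ?_⟩
    by_contra hlt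
    push Not at hlt
    have h2 := aux_mono μ hlt.le
    have h3 : a ≤ distFun μ y := hy
    rw [aux_distFun_eq μ b] at h2
    linarith
  have hne : {x : ℝ | a ≤ distFun μ x}.Nonempty := by
    have := (ProbabilityTheory.tendsto_cdf_atTop μ).eventually (lt_mem_nhds h1)
    obtain ⟨b, hb⟩ := this.exists
    exact ⟨b, by simp only [mem_ofPred_eq, aux_distFun_eq]; exact hb.le⟩
  constructor
  · intro h
    exact csInf_le hbdd h
  · intro h
    have hall : ∀ y, x < y → a ≤ distFun μ y := by
      intro y hy
      obtain ⟨w, hw, hwy⟩ := exists_lt_of_csInf_lt hne (lt_of_le_of_lt h hy)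
      exact le_trans hw (aux_mono μ hwy.le)
    have hrc : Tendsto (ProbabilityTheory.cdf μ) (𝓝[>] x) (𝓝 (ProbabilityTheory.cdf μ x)) :=
      ((ProbabilityTheory.cdf μ).right_continuous x).mono Ioi_subset_Ici_self
    rw [aux_distFun_eq]
    refine ge_of_tendsto hrc ?_
    filter_upwards [self_mem_nhdsWithin] with y hy
    rw [← aux_distFun_eq]
    exact hall y hy

lemma aux_dQ_Ico (μ : Measure ℝ) [IsProbabilityMeasure μ] {a b : ℝ} (h0 : 0 < a) (h1 : a < 1)
    (g0 : 0 < b) (g1 : b < 1) :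
    dQ μ (Ico a b) = ENNReal.ofReal (quantileFun (distFun μ) b - quantileFun (distFun μ) a) := by
  rw [dQ, Measure.map_apply (aux_mono μ).measurable measurableSet_Ico, ← Real.volume_Ico]
  congr 1
  ext x
  simp only [mem_preimage, mem_Ico, aux_galois μ h0 h1 x]
  rw [← not_le, aux_galois μ g0 g1 x, not_le]

lemma aux_Q_mono (μ : Measure ℝ) [IsProbabilityMeasure μ] {a b : ℝ} (h0 : 0 < a) (hab : a ≤ b)
    (g1 : b < 1) : quantileFun (distFun μ) a ≤ quantileFun (distFun μ) b := by
  rw [← aux_galois μ h0 (by linarith)]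
  exact hab.trans ((aux_galois μ (by linarith) g1 _).2 le_rfl)

/-- normalizer -/
def auxA (Q : ℝ → ℝ) (s : ℝ) : ℝ := Q (1 - s * (1/2)) - Q (1 - s * 1)

lemma aux_small (c : ℝ) (hc : 0 < c) : ∀ᶠ s in 𝓝[>] (0:ℝ), 0 < s ∧ s < c := by
  filter_upwards [Ioo_mem_nhdsGT hc] with s hs using hs

lemma aux_dH {Q : ℝ → ℝ} (hD : DeHaanGumbel Q) {x z : ℝ} (hx : 0 < x) (hz : 0 < z) :
    Tendsto (fun s => (Q (1 - s * x) - Q (1 - s * z)) / auxA Q s) (𝓝[>] 0)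
      (𝓝 ((Real.log z - Real.log x) / Real.log 2)) := by
  have := hD x (1/2) z 1 hx (by norm_num) hz one_pos (by norm_num)
  have e : Real.log (1/2) = - Real.log 2 := by rw [one_div, Real.log_inv]
  rw [e, Real.log_one, sub_zero, div_neg, ← neg_div, neg_sub] at this
  exact this

lemma aux_A_pos (μ : Measure ℝ) [IsProbabilityMeasure μ]
    (hD : DeHaanGumbel (quantileFun (distFun μ))) :
    ∀ᶠ s in 𝓝[>] (0:ℝ), 0 < auxA (quantileFun (distFun μ)) s := by
  have h := aux_dH hD (x := 1/2) (z := 1) (by norm_num) one_pos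
  have hl : (0:ℝ) < (Real.log 1 - Real.log (1/2)) / Real.log 2 := by
    have := Real.log_pos (x := 2) (by norm_num)
    rw [one_div, Real.log_inv, Real.log_one]; simp [this.ne']
  filter_upwards [h.eventually (lt_mem_nhds hl), aux_small 1 one_pos] with s hs hs1
  have : 0 ≤ auxA (quantileFun (distFun μ)) s := by
    rw [auxA, sub_nonneg]
    apply aux_Q_mono <;> linarith
  rcases this.lt_or_eq with h | h
  · exact h
  · rw [← h] at hs; simp at hs

lemma aux_pointwise (μ : Measure ℝ) [IsProbabilityMeasure μ]
    (hD : DeHaanGumbel (quantileFun (distFun μ))) {t : ℝ} (ht0 : 0 < t) (ht1 : t < 1) :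
    Tendsto (fun s => dQ μ (Ioo (1 - s) (1 - s * t)) /
        ENNReal.ofReal (auxA (quantileFun (distFun μ)) s)) (𝓝[>] 0)
      (𝓝 (ENNReal.ofReal (- Real.log t / Real.log 2))) := by
  have key : ∀ z, 0 < z → Tendsto (fun s => dQ μ (Ico (1 - s * z) (1 - s * t)) /
        ENNReal.ofReal (auxA (quantileFun (distFun μ)) s)) (𝓝[>] 0)
      (𝓝 (ENNReal.ofReal ((Real.log z - Real.log t) / Real.log 2))) := by
    intro z hz
    refine ((ENNReal.continuous_ofReal.tendsto _).comp (aux_dH hD ht0 hz)).congr' ?_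
    filter_upwards [aux_A_pos μ hD, aux_small 1 one_pos, aux_small (1/z) (by positivity)]
      with s hA hs hsz
    have h1 : s * z < 1 := by
      have := hsz.2
      rwa [lt_div_iff₀ hz] at this
    have h2 : 0 < s * z := mul_pos hs.1 hz
    have h3 : s * t < 1 := by nlinarith
    have h4 : 0 < s * t := mul_pos hs.1 ht0
    rw [aux_dQ_Ico μ (by linarith) (by linarith) (by linarith) (by linarith)]
    simp only [Function.comp]
    rw [ENNReal.ofReal_div_of_pos hA]
  rw [tendsto_order]
  constructor
  · intro a ha
    have hc : Tendsto (fun z => ENNReal.ofReal ((Real.log z - Real.log t) / Real.log 2)) (𝓝[<] 1)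
        (𝓝 (ENNReal.ofReal (- Real.log t / Real.log 2))) := by
      have : ContinuousAt (fun z => ENNReal.ofReal ((Real.log z - Real.log t) / Real.log 2)) 1 := by
        apply ENNReal.continuous_ofReal.continuousAt.comp
        exact ((Real.continuousAt_log one_ne_zero).sub continuousAt_const).div_const _
      have h2 := this.tendsto
      simp only [Real.log_one, zero_sub] at h2
      exact h2.mono_left nhdsWithin_le_nhds
    obtain ⟨z, hz, hz1⟩ := ((hc.eventually (lt_mem_nhds ha)).and (Ioo_mem_nhdsLT ht1)).exists
    have hz0 : 0 < z := ht0.trans hz1.1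
    filter_upwards [(key z hz0).eventually (lt_mem_nhds hz), aux_small 1 one_pos] with s hs hs1
    refine hs.trans_le ?_
    refine ENNReal.div_le_div_right (measure_mono ?_) _
    intro u hu
    refine ⟨lt_of_lt_of_le ?_ hu.1, hu.2⟩
    have := hz1.2
    nlinarith
  · intro a ha
    have h1 := key 1 one_pos
    simp only [Real.log_one, zero_sub] at h1
    filter_upwards [h1.eventually (gt_mem_nhds ha)] with s hs
    refine lt_of_le_of_lt ?_ hs
    gcongr
    intro u hu
    refine ⟨?_, hu.2⟩
    rw [mul_one]; exact hu.1.le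

lemma aux_potter (μ : Measure ℝ) [IsProbabilityMeasure μ]
    (hD : DeHaanGumbel (quantileFun (distFun μ))) {δ : ℝ} (hδ : 0 < δ) :
    ∃ C : ℝ, ∀ᶠ s in 𝓝[>] (0:ℝ), ∀ t : ℝ, 0 < t → t < 1 →
      dQ μ (Ioo (1 - s) (1 - s * t)) / ENNReal.ofReal (auxA (quantileFun (distFun μ)) s)
        ≤ ENNReal.ofReal (C * t ^ (-δ)) := by
  set Q := quantileFun (distFun μ) with hQ
  set r : ℝ := 2 ^ δ with hr
  have hr1 : 1 < r := Real.one_lt_rpow (by norm_num) hδ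
  have h := aux_dH hD (x := 1/4) (z := 1/2) (by norm_num) (by norm_num)
  have hlim : (Real.log (1/2) - Real.log (1/4)) / Real.log 2 = 1 := by
    have := Real.log_pos (x := 2) (by norm_num)
    have e : (1/4:ℝ) = (1/2)^2 := by norm_num
    rw [e, Real.log_pow, one_div, Real.log_inv]
    field_simp; norm_num
  rw [hlim] at h
  have hev := ((h.eventually (gt_mem_nhds hr1)).and (aux_A_pos μ hD)).and (aux_small 1 one_pos)
  obtain ⟨s0, hs0, hsub⟩ := mem_nhdsGT_iff_exists_Ioo_subset.1 hev
  have hs0' : (0:ℝ) < s0 := hs0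
  have step : ∀ s, 0 < s → s < s0 → auxA Q (s * (1/2)) ≤ r * auxA Q s ∧ 0 < auxA Q s ∧ s < 1 := by
    intro s h1 h2
    obtain ⟨⟨ha, hb⟩, hc⟩ := hsub ⟨h1, h2⟩
    refine ⟨?_, hb, hc.2⟩
    rw [div_lt_iff₀ hb] at ha
    refine le_trans (le_of_eq ?_) ha.le
    rw [auxA]; congr 2 <;> ring
  have iter : ∀ s, 0 < s → s < s0 → ∀ n : ℕ, auxA Q (s * (1/2)^n) ≤ r^n * auxA Q s := by
    intro s h1 h2 n
    induction n with
    | zero => simp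
    | succ n ih =>
      have hp : (0:ℝ) < (1/2)^n := by positivity
      have hp1 : ((1:ℝ)/2)^n ≤ 1 := pow_le_one₀ (by norm_num) (by norm_num)
      have := (step (s * (1/2)^n) (by positivity) (by nlinarith)).1
      calc auxA Q (s * (1/2)^(n+1)) = auxA Q (s * (1/2)^n * (1/2)) := by rw [pow_succ, mul_assoc]
        _ ≤ r * auxA Q (s * (1/2)^n) := this
        _ ≤ r * (r^n * auxA Q s) := by gcongr
        _ = _ := by ring
  have tele : ∀ s, 0 < s → s < s0 → ∀ n : ℕ,
      Q (1 - s * (1/2)^n) - Q (1 - s) ≤ (r^n - 1)/(r-1) * auxA Q s := by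
    intro s h1 h2 n
    induction n with
    | zero => simp
    | succ n ih =>
      have := iter s h1 h2 n
      have e : auxA Q (s * (1/2)^n) = Q (1 - s * (1/2)^(n+1)) - Q (1 - s * (1/2)^n) := by
        rw [auxA, pow_succ, mul_one, mul_assoc]
      rw [e] at this
      have e2 : (r^(n+1) - 1)/(r-1) = (r^n-1)/(r-1) + r^n := by
        have : r - 1 ≠ 0 := by linarith
        field_simp; ring
      rw [e2, add_mul]; linarith
  refine ⟨r / (r-1), ?_⟩
  filter_upwards [aux_small s0 hs0'] with s hs t ht0 ht1
  obtain ⟨n, hn1, hn2⟩ := exists_nat_pow_near_of_lt_one ht0 ht1.le (y := (1/2:ℝ))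
    (by norm_num) (by norm_num)
  obtain ⟨-, hA, hs1⟩ := step s hs.1 hs.2
  have hb := tele s hs.1 hs.2 (n+1)
  have hst : 0 < s * t := mul_pos hs.1 ht0
  have hst1 : s * t < 1 := by nlinarith
  have hp : (0:ℝ) < (1/2)^(n+1) := by positivity
  have hsp : 0 < s * (1/2)^(n+1) := mul_pos hs.1 hp
  have hle : s * (1/2)^(n+1) ≤ s * t := by have := hs.1; gcongr
  have hm : Q (1 - s * t) ≤ Q (1 - s * (1/2)^(n+1)) :=
    aux_Q_mono μ (by linarith) (by linarith) (by linarith)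
  calc dQ μ (Ioo (1 - s) (1 - s * t)) / ENNReal.ofReal (auxA Q s)
      ≤ dQ μ (Ico (1 - s) (1 - s * t)) / ENNReal.ofReal (auxA Q s) := by
        gcongr; exact Ioo_subset_Ico_self
    _ = ENNReal.ofReal ((Q (1 - s*t) - Q (1-s)) / auxA Q s) := by
        rw [aux_dQ_Ico μ (by linarith) (by linarith [hs.1]) (by linarith) (by linarith),
          ENNReal.ofReal_div_of_pos hA]
    _ ≤ _ := by
        apply ENNReal.ofReal_le_ofReal
        rw [div_le_iff₀ hA]
        have hrn : r^n ≤ t^(-δ) := by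
          have e : r^n = ((1/2:ℝ)^n)^(-δ) := by
            rw [hr, ← Real.rpow_natCast, ← Real.rpow_mul (by norm_num), ← Real.rpow_natCast (1/2),
              ← Real.rpow_mul (by norm_num), one_div, Real.inv_rpow (by norm_num),
              ← Real.rpow_neg (by norm_num)]
            congr 1; ring
          rw [e]
          exact Real.rpow_le_rpow_of_nonpos ht0 hn2 (by linarith)
        have hr0 : 0 < r - 1 := by linarith
        calc Q (1 - s*t) - Q (1-s) ≤ (r^(n+1) - 1)/(r-1) * auxA Q s := by linarith
          _ ≤ (r * t^(-δ)) / (r-1) * auxA Q s := by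
            gcongr
            rw [pow_succ]
            nlinarith
          _ = _ := by ring

lemma aux_int {β : ℝ} (hβ : 0 < β) :
    ∫⁻ t in Ioo (0:ℝ) 1, ENNReal.ofReal (- Real.log t / Real.log 2) * ENNReal.ofReal (t ^ (β - 1))
      = ENNReal.ofReal (1 / (β ^ 2 * Real.log 2)) := by
  have hl2 := Real.log_pos (x := 2) (by norm_num)
  set f : ℝ → ℝ := fun x => (x ^ β / β^2 - Real.log x * x ^ β / β) / Real.log 2 with hf
  set f' : ℝ → ℝ := fun x => - Real.log x / Real.log 2 * x ^ (β - 1) with hf'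
  have hnn : ∀ x ∈ Ioo (0:ℝ) 1, 0 ≤ f' x := by
    intro x hx
    have := Real.log_neg hx.1 hx.2
    have := Real.rpow_nonneg hx.1.le (β - 1)
    simp only [hf']
    apply mul_nonneg _ this
    apply div_nonneg _ hl2.le
    linarith
  have hder : ∀ x ∈ Ioo (0:ℝ) 1, HasDerivAt f (f' x) x := by
    intro x hx
    have hx0 := hx.1
    have h1 := Real.hasDerivAt_rpow_const (x := x) (p := β) (Or.inl hx0.ne')
    have h2 := Real.hasDerivAt_log hx0.ne'
    have := ((h1.div_const (β^2)).sub ((h2.mul h1).div_const β)).div_const (Real.log 2)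
    refine HasDerivAt.congr_deriv (f := f) this ?_
    simp only [hf']
    have e : x ^ β = x ^ (β - 1) * x := by
      rw [Real.rpow_sub_one hx0.ne']; field_simp
    rw [e]
    field_simp
    ring
  have hcont : ContinuousOn f (Icc 0 1) := by
    intro x hx
    rcases hx.1.eq_or_lt with h | h
    · subst h
      have t1 : ContinuousWithinAt (fun x : ℝ => Real.log x * x ^ β) (Icc 0 1) 0 := by
        have := tendsto_log_mul_rpow_nhdsGT_zero hβ
        have h3 : ContinuousWithinAt (fun x : ℝ => Real.log x * x ^ β) (Ioi 0) 0 := by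
          rw [ContinuousWithinAt]; simpa using this
        have h4 := continuousWithinAt_insert_self.2 h3
        exact h4.mono (by intro y hy; rcases hy.1.eq_or_lt with h | h <;> simp [h, hy.1])
      have t2 : ContinuousAt (fun x : ℝ => x ^ β) 0 :=
        Real.continuousAt_rpow_const _ _ (Or.inr hβ.le)
      exact ((t2.continuousWithinAt.div_const _).sub (t1.div_const _)).div_const _
    · apply ContinuousAt.continuousWithinAt
      have t2 : ContinuousAt (fun x : ℝ => x ^ β) x :=
        Real.continuousAt_rpow_const _ _ (Or.inr hβ.le)
      exact ((t2.div_const _).sub (((Real.continuousAt_log h.ne').mul t2).div_const _)).div_const _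
  have hint : IntervalIntegrable f' volume 0 1 := by
    apply intervalIntegral.intervalIntegrable_deriv_of_nonneg (g := f)
    · simpa using hcont
    · simpa using hder
    · simpa using hnn
  have hI := intervalIntegral.integral_eq_sub_of_hasDerivAt_of_le zero_le_one hcont hder hint
  rw [intervalIntegral.integral_of_le zero_le_one, integral_Ioc_eq_integral_Ioo] at hI
  have hint' := (intervalIntegrable_iff_integrableOn_Ioo_of_le zero_le_one).1 hint
  have : f 1 - f 0 = 1 / (β ^ 2 * Real.log 2) := by
    simp only [hf, Real.log_one, Real.log_zero, Real.one_rpow, Real.zero_rpow hβ.ne']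
    field_simp; simp
  rw [← this, ← hI, ofReal_integral_eq_lintegral_ofReal hint'
    ((ae_restrict_iff' measurableSet_Ioo).2 (ae_of_all _ hnn))]
  refine setLIntegral_congr_fun measurableSet_Ioo ?_
  intro x hx
  simp only [hf']
  rw [ENNReal.ofReal_mul']
  exact Real.rpow_nonneg hx.1.le _

lemma aux_cBeta (μ : Measure ℝ) {s β : ℝ} (hs : 0 < s) (hβ : 0 < β) :
    cBeta μ s β = (ENNReal.ofReal β * ∫⁻ t in Ioo (0:ℝ) 1,
      dQ μ (Ioo (1 - s) (1 - s * t)) * ENNReal.ofReal (t ^ (β - 1))).toReal := by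
  have e1 : cBeta μ s β = ∫ u in Ioo (1 - s) 1, ((1 - u) / s) ^ β ∂(dQ μ) := by
    rw [cBeta, ← integral_const_mul]
    refine setIntegral_congr_fun measurableSet_Ioo ?_
    intro u hu
    simp only
    rw [Real.div_rpow (by linarith [hu.2]) hs.le, Real.rpow_neg hs.le]
    ring
  have hnn : ∀ᵐ u ∂((dQ μ).restrict (Ioo (1 - s) 1)), 0 ≤ (1 - u) / s := by
    refine (ae_restrict_iff' measurableSet_Ioo).2 (ae_of_all _ fun u hu => ?_)
    exact div_nonneg (by linarith [hu.2]) hs.le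
  rw [e1, integral_eq_lintegral_of_nonneg_ae, lintegral_rpow_eq_lintegral_meas_lt_mul _ hnn _ hβ]
  · congr 2
    rw [← lintegral_indicator measurableSet_Ioi, ← lintegral_indicator measurableSet_Ioo]
    congr 1
    ext t
    simp only [indicator, mem_Ioi, mem_Ioo]
    by_cases h0 : 0 < t
    · by_cases h1 : t < 1
      · rw [if_pos h0, if_pos ⟨h0, h1⟩, Measure.restrict_apply]
        · congr 2
          ext u
          simp only [mem_inter_iff, mem_ofPred_eq, mem_Ioo, lt_div_iff₀ hs]
          have := mul_pos h0 hs
          constructor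
          · rintro ⟨a, b, c⟩; constructor <;> linarith
          · rintro ⟨a, b⟩; refine ⟨?_, ?_, ?_⟩ <;> linarith
        · exact measurableSet_lt measurable_const (by fun_prop)
      · rw [if_pos h0, if_neg (by tauto), Measure.restrict_apply]
        · convert zero_mul _
          convert measure_empty
          · ext u
            simp only [mem_inter_iff, mem_ofPred_eq, mem_Ioo, lt_div_iff₀ hs, mem_empty_iff_false,
              iff_false]
            rintro ⟨a, b, c⟩
            nlinarith
          · infer_instance
        · exact measurableSet_lt measurable_const (by fun_prop)
    · rw [if_neg h0, if_neg (by tauto)]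
  · fun_prop
  · filter_upwards [hnn] with u hu
    exact Real.rpow_nonneg hu _
  · exact (Measurable.aestronglyMeasurable (by fun_prop))

lemma aux_main (μ : Measure ℝ) [IsProbabilityMeasure μ]
    (hD : DeHaanGumbel (quantileFun (distFun μ))) {β : ℝ} (hβ : 0 < β) :
    Tendsto (fun s => cBeta μ s β / auxA (quantileFun (distFun μ)) s) (𝓝[>] 0)
      (𝓝 (1 / (β * Real.log 2))) := by
  obtain ⟨C, hC⟩ := aux_potter μ hD (half_pos hβ)
  have hmeas : ∀ s : ℝ, 0 < s → Measurable (fun t : ℝ => dQ μ (Ioo (1 - s) (1 - s * t))) := by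
    intro s hs
    apply Antitone.measurable
    intro a b hab
    apply measure_mono
    apply Ioo_subset_Ioo_right
    nlinarith
  have hlim : Tendsto (fun s => ∫⁻ t in Ioo (0:ℝ) 1,
      dQ μ (Ioo (1 - s) (1 - s * t)) / ENNReal.ofReal (auxA (quantileFun (distFun μ)) s)
        * ENNReal.ofReal (t ^ (β - 1))) (𝓝[>] 0)
      (𝓝 (∫⁻ t in Ioo (0:ℝ) 1, ENNReal.ofReal (- Real.log t / Real.log 2) *
        ENNReal.ofReal (t ^ (β - 1)))) := by
    refine tendsto_lintegral_filter_of_dominated_convergence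
      (fun t => ENNReal.ofReal (C * t ^ (β/2 - 1))) ?_ ?_ ?_ ?_
    · filter_upwards [self_mem_nhdsWithin] with s hs
      exact ((hmeas s hs).div_const _).mul (by fun_prop)
    · filter_upwards [hC] with s hs
      refine (ae_restrict_iff' measurableSet_Ioo).2 (ae_of_all _ fun t ht => ?_)
      have e : C * t ^ (β/2 - 1) = C * t ^ (-(β/2)) * t ^ (β - 1) := by
        rw [mul_assoc, ← Real.rpow_add ht.1]; congr 2; ring
      rw [e, ENNReal.ofReal_mul' (Real.rpow_nonneg ht.1.le _)]
      gcongr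
      exact hs t ht.1 ht.2
    · have : IntegrableOn (fun t : ℝ => C * t ^ (β/2 - 1)) (Ioo 0 1) := by
        apply Integrable.const_mul
        exact (intervalIntegral.integrableOn_Ioo_rpow_iff one_pos).2 (by linarith)
      exact this.lintegral_lt_top.ne
    · refine (ae_restrict_iff' measurableSet_Ioo).2 (ae_of_all _ fun t ht => ?_)
      exact ENNReal.Tendsto.mul_const (aux_pointwise μ hD ht.1 ht.2) (Or.inr ENNReal.ofReal_ne_top)
  rw [aux_int hβ] at hlim
  have h2 := (ENNReal.tendsto_toReal ENNReal.ofReal_ne_top).comp hlim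
  have h3 := h2.const_mul β
  have e : β * (ENNReal.ofReal (1 / (β ^ 2 * Real.log 2))).toReal = 1 / (β * Real.log 2) := by
    have hl2 := Real.log_pos (x := 2) (by norm_num)
    rw [ENNReal.toReal_ofReal (by positivity)]
    field_simp
  rw [e] at h3
  refine h3.congr' ?_
  filter_upwards [self_mem_nhdsWithin, aux_A_pos μ hD] with s hs hA
  rw [aux_cBeta μ hs hβ, ENNReal.toReal_mul, ENNReal.toReal_ofReal hβ.le, mul_div_assoc]
  congr 1
  simp only [Function.comp]
  have : ∀ t : ℝ, dQ μ (Ioo (1 - s) (1 - s * t)) /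
      ENNReal.ofReal (auxA (quantileFun (distFun μ)) s) * ENNReal.ofReal (t ^ (β - 1))
      = (dQ μ (Ioo (1 - s) (1 - s * t)) * ENNReal.ofReal (t ^ (β - 1))) *
        (ENNReal.ofReal (auxA (quantileFun (distFun μ)) s))⁻¹ := by
    intro t; rw [div_eq_mul_inv]; ring
  simp only [this]
  have hm2 : Measurable (fun t : ℝ => dQ μ (Ioo (1 - s) (1 - s * t)) *
      ENNReal.ofReal (t ^ (β - 1))) := (hmeas s hs).mul (by fun_prop)
  rw [lintegral_mul_const _ hm2, ENNReal.toReal_mul,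
    ENNReal.toReal_inv, ENNReal.toReal_ofReal hA.le, div_eq_mul_inv]

/-- **Lemma 5.** If `F ∈ D(Λ)` then for each fixed `β > 0`,
`c(s,β)/c(s) → 1/β` as `s ↓ 0`. -/
theorem cBeta_div_c_tendsto
    (μ : Measure ℝ) [IsProbabilityMeasure μ] (F Q : ℝ → ℝ)
    (hF : F = distFun μ) (hQ : Q = quantileFun F)
    (hD : DeHaanGumbel Q) (β : ℝ) (hβ : 0 < β)
    (hfin : ∀ᶠ s in nhdsWithin (0:ℝ) (Set.Ioi 0),
      IntegrableOn (fun u : ℝ => (1 - u) ^ β) (Set.Ioo (1 - s) 1) (dQ μ))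
    (hc : ∀ᶠ s in nhdsWithin (0:ℝ) (Set.Ioi 0),
      IntegrableOn (fun u : ℝ => 1 - u) (Set.Ioo (1 - s) 1) (dQ μ) ∧ 0 < cFun μ s) :
    Tendsto (fun s : ℝ => cBeta μ s β / cFun μ s)
      (nhdsWithin 0 (Set.Ioi 0)) (nhds (1 / β)) := by

  subst hF
  subst hQ
  have hl2 := Real.log_pos (x := 2) (by norm_num)
  have h1 := aux_main μ hD hβ
  have h2 := aux_main μ hD one_pos
  have h := h1.div h2 (by positivity)
  have e : 1 / (β * Real.log 2) / (1 / (1 * Real.log 2)) = 1 / β := by field_simp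
  rw [e] at h
  refine h.congr' ?_
  filter_upwards [aux_A_pos μ hD] with s hA
  simp only [Pi.div_apply]
  rw [cFun, div_div_div_cancel_right₀ hA.ne']
end
end

section
/- Suppose F ∈ D(Λ), i.e. its quantile function Q satisfies de Haan's criterion. Then σ²(s)/(2 s c(s)²) → 1 as s ↓ 0. -/
open MeasureTheory Filter Set

noncomputable section

lemma aux_le_iff (μ : Measure ℝ) [IsProbabilityMeasure μ] {s : ℝ} (h0 : 0 < s) (h1 : s < 1)
    (x : ℝ) : s ≤ distFun μ x ↔ quantileFun (distFun μ) s ≤ x := by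
  have hF : distFun μ = ProbabilityTheory.cdf μ := by
    funext y
    rw [ProbabilityTheory.cdf_eq_real]; rfl
  rw [hF]
  set G := ProbabilityTheory.cdf μ with hG
  have hmono : Monotone G := G.mono
  have hne : {x : ℝ | s ≤ G x}.Nonempty := by
    have := (ProbabilityTheory.tendsto_cdf_atTop μ).eventually (lt_mem_nhds h1)
    obtain ⟨y, hy⟩ := this.exists
    exact ⟨y, le_of_lt hy⟩
  have hbd : BddBelow {x : ℝ | s ≤ G x} := by
    have := (ProbabilityTheory.tendsto_cdf_atBot μ).eventually (gt_mem_nhds h0)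
    obtain ⟨y, hy⟩ := this.exists
    refine ⟨y, fun z hz => ?_⟩
    by_contra hlt
    have := hmono (le_of_lt (not_le.mp hlt))
    have h3 : s ≤ G z := hz
    have hy' : G y < s := hy
    linarith
  constructor
  · intro h
    exact csInf_le hbd h
  · intro h
    have hq : s ≤ G (sInf {x : ℝ | s ≤ G x}) := by
      have hc := (G.right_continuous' (sInf {x : ℝ | s ≤ G x})).mono Ioi_subset_Ici_self
      refine ge_of_tendsto hc ?_
      filter_upwards [self_mem_nhdsWithin] with y hy
      obtain ⟨z, hz, hzy⟩ := exists_lt_of_csInf_lt hne hy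
      exact le_trans hz (hmono hzy.le)
    exact le_trans hq (hmono h)

lemma aux_meas_distFun (μ : Measure ℝ) [IsProbabilityMeasure μ] : Measurable (distFun μ) := by
  have hF : distFun μ = ProbabilityTheory.cdf μ := by
    funext y
    rw [ProbabilityTheory.cdf_eq_real]; rfl
  rw [hF]
  exact (ProbabilityTheory.cdf μ).mono.measurable

lemma aux_Ico (μ : Measure ℝ) [IsProbabilityMeasure μ] {a b : ℝ} (h0 : 0 < a) (hab : a ≤ b)
    (h1 : b < 1) : dQ μ (Ico a b) =
      ENNReal.ofReal (quantileFun (distFun μ) b - quantileFun (distFun μ) a) := by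
  rw [dQ, Measure.map_apply (aux_meas_distFun μ) measurableSet_Ico]
  have : distFun μ ⁻¹' Ico a b
      = Ico (quantileFun (distFun μ) a) (quantileFun (distFun μ) b) := by
    ext x
    simp only [mem_preimage, mem_Ico]
    rw [aux_le_iff μ h0 (hab.trans_lt h1), ← not_le, aux_le_iff μ (h0.trans_le hab) h1, not_le]
  rw [this, Real.volume_Ico]

lemma aux_mono_s6 (μ : Measure ℝ) [IsProbabilityMeasure μ] {a b : ℝ} (h0 : 0 < a) (hab : a ≤ b)
    (h1 : b < 1) : quantileFun (distFun μ) a ≤ quantileFun (distFun μ) b := by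
  rw [← aux_le_iff μ h0 (hab.trans_lt h1)]
  exact hab.trans ((aux_le_iff μ (h0.trans_le hab) h1 _).2 le_rfl)

lemma aux_Ico_real (μ : Measure ℝ) [IsProbabilityMeasure μ] {a b : ℝ} (h0 : 0 < a) (hab : a ≤ b)
    (h1 : b < 1) : (dQ μ).real (Ico a b) =
      quantileFun (distFun μ) b - quantileFun (distFun μ) a := by
  rw [Measure.real, aux_Ico μ h0 hab h1, ENNReal.toReal_ofReal]
  linarith [aux_mono_s6 μ h0 hab h1]

lemma aux_Ioo_le (μ : Measure ℝ) [IsProbabilityMeasure μ] {a b : ℝ} (h0 : 0 < a) (hab : a ≤ b)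
    (h1 : b < 1) : (dQ μ).real (Ioo a b) ≤
      quantileFun (distFun μ) b - quantileFun (distFun μ) a := by
  rw [← aux_Ico_real μ h0 hab h1]
  refine measureReal_mono Ioo_subset_Ico_self ?_
  rw [aux_Ico μ h0 hab h1]; exact ENNReal.ofReal_ne_top

lemma aux_le_Ioo (μ : Measure ℝ) [IsProbabilityMeasure μ] {a c b : ℝ} (h0 : 0 < a) (hac : a < c)
    (hcb : c ≤ b) (h1 : b < 1) : quantileFun (distFun μ) b - quantileFun (distFun μ) c ≤
      (dQ μ).real (Ioo a b) := by
  rw [← aux_Ico_real μ (h0.trans hac) hcb h1]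
  refine measureReal_mono (fun x hx => ⟨hac.trans_le hx.1, hx.2⟩) ?_
  refine ne_top_of_le_ne_top ?_ (measure_mono Ioo_subset_Ico_self)
  rw [aux_Ico μ h0 (hac.le.trans hcb) h1]; exact ENNReal.ofReal_ne_top

lemma aux_log_int : ∫ x in Ioc (0:ℝ) 1, Real.log x / Real.log (1/2) = (Real.log 2)⁻¹ := by
  rw [← intervalIntegral.integral_of_le zero_le_one, intervalIntegral.integral_div, integral_log]
  have : Real.log (1/2) = - Real.log 2 := by rw [one_div, Real.log_inv]
  rw [this]; simp [neg_div_neg_eq]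

lemma aux_logsq_int : ∫ x in Ioc (0:ℝ) 1, (Real.log x / Real.log (1/2)) ^ 2
    = 2 * ((Real.log 2)⁻¹) ^ 2 := by
  have h1 : Real.log (1/2) = - Real.log 2 := by rw [one_div, Real.log_inv]
  have hcont : Continuous (fun x : ℝ => 4 * (Real.sqrt x * Real.log (Real.sqrt x)) ^ 2
      - 2 * (x * Real.log x) + 2 * x) := by
    have h := Real.continuous_mul_log
    have h2 : Continuous (fun x : ℝ => Real.sqrt x * Real.log (Real.sqrt x)) :=
      h.comp Real.continuous_sqrt
    fun_prop
  have hc2 : ContinuousOn (fun x : ℝ => x * Real.log x ^ 2 - 2 * (x * Real.log x) + 2 * x)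
      (Icc 0 1) := by
    refine hcont.continuousOn.congr fun x hx => ?_
    have : Real.sqrt x ^ 2 = x := Real.sq_sqrt hx.1
    simp only
    rw [Real.log_sqrt hx.1, mul_pow, this]; ring
  have hd : ∀ x ∈ Ioo (0:ℝ) 1, HasDerivAt
      (fun x : ℝ => x * Real.log x ^ 2 - 2 * (x * Real.log x) + 2 * x) (Real.log x ^ 2) x := by
    intro x hx
    have hl := Real.hasDerivAt_log hx.1.ne'
    have hi := hasDerivAt_id x
    have := ((hi.mul (hl.pow 2)).sub ((hi.mul hl).const_mul 2)).add (hi.const_mul 2)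
    have hx0 := hx.1.ne'
    refine this.congr_deriv ?_
    simp
    field_simp
    ring
  have hint := intervalIntegral.integrableOn_deriv_of_nonneg hc2 hd (fun x _ => sq_nonneg _)
  have := intervalIntegral.integral_eq_sub_of_hasDerivAt_of_le zero_le_one hc2 hd
    ((intervalIntegrable_iff_integrableOn_Ioc_of_le zero_le_one).2 hint)
  simp only [div_pow]
  rw [← intervalIntegral.integral_of_le zero_le_one, intervalIntegral.integral_div, this, h1]
  simp [div_eq_mul_inv]

lemma aux_c (μ : Measure ℝ) {s : ℝ} (hs : 0 < s)
    (hi : IntegrableOn (fun u : ℝ => 1 - u) (Set.Ioo (1 - s) 1) (dQ μ)) :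
    ∫ u in Ioo (1 - s) 1, (1 - u) ∂(dQ μ)
      = ∫ t in Ioi (0:ℝ), (dQ μ).real (Ioo (1 - s) (1 - t)) := by
  rw [hi.integral_eq_integral_meas_lt]
  · refine setIntegral_congr_fun measurableSet_Ioi fun t ht => ?_
    have ht' : 0 < t := ht
    simp only [Measure.real]
    rw [Measure.restrict_apply (measurableSet_lt measurable_const (by fun_prop))]
    congr 2
    ext u
    simp only [mem_inter_iff, mem_ofPred_eq, mem_Ioo]
    constructor
    · rintro ⟨h1, h2, h3⟩; exact ⟨h2, by linarith⟩
    · rintro ⟨h1, h2⟩; exact ⟨by linarith, h1, by linarith⟩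
  · filter_upwards [ae_restrict_mem measurableSet_Ioo] with u hu
    have := hu.2
    simp only [Pi.zero_apply]; linarith

lemma aux_cFun (μ : Measure ℝ) {s : ℝ} (hs : 0 < s)
    (hi : IntegrableOn (fun u : ℝ => 1 - u) (Set.Ioo (1 - s) 1) (dQ μ)) :
    cFun μ s = ∫ x in Ioi (0:ℝ), (dQ μ).real (Ioo (1 - s) (1 - s * x)) := by
  rw [cFun, cBeta]
  simp only [Real.rpow_one]
  rw [aux_c μ hs hi,
    integral_comp_mul_left_Ioi (fun t => (dQ μ).real (Ioo (1 - s) (1 - t))) 0 hs, Real.rpow_neg_one]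
  simp

lemma aux_sigma (μ : Measure ℝ) [IsProbabilityMeasure μ] {s : ℝ} (hs : 0 < s) (hs1 : s < 1)
    (hi : IntegrableOn (fun u : ℝ => 1 - u) (Set.Ioo (1 - s) 1) (dQ μ))
    (hi2 : ∀ v ∈ Set.Ioo (1 - s) (1:ℝ),
        IntegrableOn (fun u : ℝ => min u v - u * v) (Set.Ioo (1 - s) 1) (dQ μ))
    (hi3 : IntegrableOn (fun v : ℝ => ∫ u in Set.Ioo (1 - s) 1, (min u v - u * v) ∂(dQ μ))
        (Set.Ioo (1 - s) 1) (dQ μ)) :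
    sigmaSq μ s = s * (∫ x in Ioi (0:ℝ), ((dQ μ).real (Ioo (1 - s) (1 - s * x))) ^ 2)
      - s ^ 2 * (cFun μ s) ^ 2 := by
  have hsf : SFinite (dQ μ) := by unfold dQ; infer_instance
  have hcs : ∫ u in Ioo (1 - s) 1, (1 - u) ∂(dQ μ) = s * cFun μ s := by
    rw [cFun, cBeta]
    simp only [Real.rpow_one]
    rw [Real.rpow_neg_one]; field_simp
  rw [sigmaSq]
  set M := (dQ μ).restrict (Ioo (1 - s) 1) with hM
  have hmem : ∀ᵐ u ∂M, u ∈ Ioo (1 - s) 1 := ae_restrict_mem measurableSet_Ioo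
  have hk : Integrable (fun z : ℝ × ℝ => min z.1 z.2 - z.1 * z.2) (M.prod M) := by
    have hmeas : AEStronglyMeasurable (fun z : ℝ × ℝ => min z.1 z.2 - z.1 * z.2) (M.prod M) := by
      refine Continuous.aestronglyMeasurable ?_
      fun_prop
    rw [integrable_prod_iff' hmeas]
    constructor
    · filter_upwards [hmem] with v hv
      exact hi2 v hv
    · refine Integrable.congr hi3 ?_
      filter_upwards [hmem] with v hv
      refine integral_congr_ae ?_
      filter_upwards [hmem] with u hu
      rw [Real.norm_of_nonneg]
      have hu0 : 0 < u := by linarith [hu.1]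
      have hv0 : 0 < v := by linarith [hv.1]
      rcases le_total u v with h | h
      · rw [min_eq_left h]; nlinarith [hv.2]
      · rw [min_eq_right h]; nlinarith [hu.2]
  have hi' : Integrable (fun u : ℝ => 1 - u) M := hi
  have hp := hi'.mul_prod hi'
  have hmin : Integrable (fun z : ℝ × ℝ => min (1 - z.1) (1 - z.2)) (M.prod M) := by
    refine (hk.add hp).congr (Eventually.of_forall fun z => ?_)
    simp only [Pi.add_apply]
    rcases le_total z.1 z.2 with h | h
    · rw [min_eq_left h, min_eq_right (by linarith)]; ring
    · rw [min_eq_right h, min_eq_left (by linarith)]; ring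
  have e1 : ∫ v, (∫ u, (min u v - u * v) ∂M) ∂M
      = ∫ z, min (1 - z.1) (1 - z.2) ∂(M.prod M) - (s * cFun μ s) ^ 2 := by
    rw [← integral_prod_symm (fun z : ℝ × ℝ => min z.1 z.2 - z.1 * z.2) hk, ← hcs, sq,
      ← integral_prod_mul (μ := M) (ν := M) (fun u : ℝ => 1 - u) (fun u : ℝ => 1 - u),
      ← integral_sub hmin hp]
    refine integral_congr_ae (Eventually.of_forall fun z => ?_)
    simp only
    rcases le_total z.1 z.2 with h | h
    · rw [min_eq_left h, min_eq_right (by linarith)]; ring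
    · rw [min_eq_right h, min_eq_left (by linarith)]; ring
  have hmem2 : ∀ᵐ z ∂(M.prod M), 0 ≤ min (1 - z.1) (1 - z.2) := by
    have h1 : ∀ᵐ z ∂(M.prod M), z.1 ∈ Ioo (1 - s) 1 :=
      Measure.quasiMeasurePreserving_fst.ae hmem
    have h2 : ∀ᵐ z ∂(M.prod M), z.2 ∈ Ioo (1 - s) 1 :=
      Measure.quasiMeasurePreserving_snd.ae hmem
    filter_upwards [h1, h2] with z hz1 hz2
    exact le_min (by linarith [hz1.2]) (by linarith [hz2.2])
  have e2 : ∫ z, min (1 - z.1) (1 - z.2) ∂(M.prod M)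
      = ∫ t in Ioi (0:ℝ), ((dQ μ).real (Ioo (1 - s) (1 - t))) ^ 2 := by
    rw [hmin.integral_eq_integral_meas_lt hmem2]
    refine setIntegral_congr_fun measurableSet_Ioi fun t ht => ?_
    have ht' : 0 < t := ht
    have hset : {z : ℝ × ℝ | t < min (1 - z.1) (1 - z.2)} = (Iio (1 - t)) ×ˢ (Iio (1 - t)) := by
      ext z
      simp only [mem_ofPred_eq, mem_prod, mem_Iio, lt_min_iff]
      constructor
      · rintro ⟨h1, h2⟩; exact ⟨by linarith, by linarith⟩
      · rintro ⟨h1, h2⟩; exact ⟨by linarith, by linarith⟩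
    simp only [Measure.real]
    rw [hset, Measure.prod_prod, ENNReal.toReal_mul, ← sq, hM,
      Measure.restrict_apply measurableSet_Iio]
    congr 3
    ext u
    simp only [mem_inter_iff, mem_Iio, mem_Ioo]
    constructor
    · rintro ⟨h1, h2, h3⟩; exact ⟨h2, by linarith⟩
    · rintro ⟨h1, h2⟩; exact ⟨by linarith, h1, by linarith⟩
  rw [e1, e2,
    integral_comp_mul_left_Ioi (fun t => (dQ μ).real (Ioo (1 - s) (1 - t)) ^ 2) 0 hs]
  simp only [mul_zero, smul_eq_mul]
  field_simp

lemma aux_potter_s6 (q : ℝ → ℝ) (s0 lam θ ρ : ℝ) (hθ : θ = (2:ℝ) ^ (-(1/4) : ℝ)) (hρ0 : 0 < ρ)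
    (hρ : ρ < 1) (hlam : lam * θ = ρ)
    (hmono : ∀ t s, 0 < t → t ≤ s → s < s0 → q (1 - s) ≤ q (1 - t))
    (hg : ∀ s, 0 < s → s < s0 →
      q (1 - s * (1/4)) - q (1 - s * (1/2)) ≤ lam * (q (1 - s * (1/2)) - q (1 - s * 1))) (n : ℕ) :
    ∀ x : ℝ, (1/2) ^ n ≤ x → x ≤ 1 → ∀ s, 0 < s → s < s0 →
      q (1 - s * x) - q (1 - s) ≤
        (1 / (1 - ρ)) * (q (1 - s * (1/2)) - q (1 - s * 1)) * x ^ (-(1/4) : ℝ) := by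
  have hC : 1 ≤ 1 / (1 - ρ) := by
    rw [le_div_iff₀ (by linarith)]; linarith
  have hg0 : ∀ s, 0 < s → s < s0 → 0 ≤ q (1 - s * (1/2)) - q (1 - s * 1) := by
    intro s h1 h2
    have := hmono (s * (1/2)) (s * 1) (by linarith) (by linarith) (by linarith)
    linarith
  have hX : ∀ x : ℝ, 0 < x → x ≤ 1 → 1 ≤ x ^ (-(1/4) : ℝ) := by
    intro x h0 h1
    exact Real.one_le_rpow_of_pos_of_le_one_of_nonpos h0 h1 (by norm_num)
  induction n with
  | zero =>
    intro x hx hx1 s hs hs0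
    have : x = 1 := le_antisymm hx1 (by simpa using hx)
    subst this
    have := hg0 s hs hs0
    have h2 : 0 ≤ (1 / (1 - ρ)) * (q (1 - s * (1/2)) - q (1 - s * 1)) * (1:ℝ) ^ (-(1/4) : ℝ) := by
      positivity
    simpa using h2
  | succ n ih =>
    intro x hx hx1 s hs hs0
    have hx0 : 0 < x := lt_of_lt_of_le (by positivity) hx
    have hgs := hg0 s hs hs0
    have hXx := hX x hx0 hx1
    set X := x ^ (-(1/4) : ℝ) with hXdef
    rcases le_or_gt (1/2) x with h | h
    · have h1 := hmono (s * (1/2)) (s * x) (by linarith)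
        (mul_le_mul_of_nonneg_left h hs.le) (by nlinarith)
      have h3 : 1 ≤ 1 / (1 - ρ) * X := one_le_mul_of_one_le_of_one_le hC hXx
      have h4 : (q (1 - s * (1/2)) - q (1 - s * 1)) * 1 ≤
        (q (1 - s * (1/2)) - q (1 - s * 1)) * (1 / (1 - ρ) * X) :=
        mul_le_mul_of_nonneg_left h3 hgs
      have e : s * 1 = s := mul_one s
      rw [e] at h4 ⊢
      linarith
    · have h1 := ih (2 * x) (by rw [pow_succ] at hx; linarith) (by linarith) (s * (1/2))
        (by linarith) (by linarith)
      have e1 : s * (1/2) * (2 * x) = s * x := by ring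
      have e2 : s * (1/2) * (1/2) = s * (1/4) := by ring
      have e3 : s * (1/2) * 1 = s * (1/2) := by ring
      rw [e1, e2, e3, Real.mul_rpow (by norm_num) hx0.le, ← hθ, ← hXdef] at h1
      have h2 := hg s hs hs0
      set g := q (1 - s * (1/2)) - q (1 - s * 1) with hgdef
      have hθ0 : 0 < θ := by rw [hθ]; positivity
      have hC0 : 0 ≤ 1 / (1 - ρ) := by linarith
      have h3 : (1 / (1 - ρ)) * (q (1 - s * (1/4)) - q (1 - s * (1/2))) * (θ * X)
          ≤ (1 / (1 - ρ)) * (lam * g) * (θ * X) := by gcongr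
      have h4 : (1 / (1 - ρ)) * (lam * g) * (θ * X) = (1 / (1 - ρ)) * ρ * g * X := by
        rw [← hlam]; ring
      have h5 : g ≤ g * X := le_mul_of_one_le_right hgs hXx
      have h6 : (1 / (1 - ρ)) * g * X = (1 / (1 - ρ)) * ρ * g * X + g * X := by
        have : 1 - ρ ≠ 0 := by linarith
        field_simp
        ring
      have e : s * 1 = s := mul_one s
      have h7 : q (1 - s * x) - q (1 - s) = (q (1 - s * x) - q (1 - s * (1/2))) + g := by
        rw [hgdef, e]; ring
      linarith

lemma aux_meas (μ : Measure ℝ) (s : ℝ) (hs : 0 < s) :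
    Measurable (fun x : ℝ => (dQ μ).real (Ioo (1 - s) (1 - s * x))) := by
  have : Antitone (fun x : ℝ => dQ μ (Ioo (1 - s) (1 - s * x))) := by
    intro a b hab
    refine measure_mono (Ioo_subset_Ioo_right ?_)
    have := mul_le_mul_of_nonneg_left hab hs.le
    linarith
  exact this.measurable.ennreal_toReal

lemma aux_pt (μ : Measure ℝ) [IsProbabilityMeasure μ]
    (hD : DeHaanGumbel (quantileFun (distFun μ)))
    (hpos : ∀ᶠ s in nhdsWithin (0:ℝ) (Ioi 0), 0 < quantileFun (distFun μ) (1 - s * (1/2))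
      - quantileFun (distFun μ) (1 - s * 1)) (x : ℝ) (hx : x ∈ Ioc (0:ℝ) 1) :
    Tendsto (fun s : ℝ => (dQ μ).real (Ioo (1 - s) (1 - s * x)) /
      (quantileFun (distFun μ) (1 - s * (1/2)) - quantileFun (distFun μ) (1 - s * 1)))
      (nhdsWithin 0 (Ioi 0)) (nhds (Real.log x / Real.log (1/2))) := by
  have hlt : ∀ᶠ s in nhdsWithin (0:ℝ) (Ioi 0), s ∈ Ioo (0:ℝ) 1 :=
    Ioo_mem_nhdsGT zero_lt_one
  rcases eq_or_lt_of_le hx.2 with h1 | h1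
  · subst h1
    simp
  set q := quantileFun (distFun μ) with hq
  have hx0 : 0 < x := hx.1
  rw [tendsto_order]
  constructor
  · intro a ha
    have hc : Tendsto (fun y : ℝ => (Real.log x - Real.log y) / Real.log (1/2))
        (nhdsWithin 1 (Iio 1)) (nhds ((Real.log x - Real.log 1) / Real.log (1/2))) := by
      refine Tendsto.mono_left ?_ nhdsWithin_le_nhds
      have : ContinuousAt (fun y : ℝ => (Real.log x - Real.log y) / Real.log (1/2)) 1 :=
        (continuousAt_const.sub (Real.continuousAt_log one_ne_zero)).div_const _
      exact this
    rw [Real.log_one, sub_zero] at hc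
    have hy1 : ∀ᶠ y in nhdsWithin (1:ℝ) (Iio 1), y ∈ Ioo x 1 := Ioo_mem_nhdsLT h1
    obtain ⟨y, hya, hyx⟩ := ((hc.eventually (lt_mem_nhds ha)).and hy1).exists
    have hd := hD x (1/2) y 1 hx0 (by norm_num) (hx0.trans hyx.1) one_pos (by norm_num)
    rw [Real.log_one, sub_zero] at hd
    filter_upwards [hd.eventually (lt_mem_nhds hya), hpos, hlt] with s h2 h3 h4
    refine lt_of_lt_of_le h2 ?_
    refine div_le_div_of_nonneg_right ?_ h3.le
    have h5 := h4.1
    have h6 := h4.2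
    refine aux_le_Ioo μ (by linarith) ?_ ?_ ?_
    · nlinarith [hyx.2]
    · nlinarith [hyx.1]
    · nlinarith
  · intro a ha
    have hd := hD x (1/2) 1 1 hx0 (by norm_num) one_pos one_pos (by norm_num)
    rw [Real.log_one, sub_zero, sub_zero] at hd
    filter_upwards [hd.eventually (gt_mem_nhds ha), hpos, hlt] with s h2 h3 h4
    refine lt_of_le_of_lt ?_ h2
    refine div_le_div_of_nonneg_right ?_ h3.le
    have h5 := h4.1
    have h6 := h4.2
    have e : 1 - s * 1 = 1 - s := by ring
    rw [e]
    refine aux_Ioo_le μ (by linarith) ?_ ?_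
    · nlinarith
    · nlinarith

lemma aux_restrict (μ : Measure ℝ) (s : ℝ) (hs : 0 < s) (k : ℕ) (hk : k ≠ 0) :
    ∫ x in Ioi (0:ℝ), ((dQ μ).real (Ioo (1 - s) (1 - s * x))) ^ k =
    ∫ x in Ioc (0:ℝ) 1, ((dQ μ).real (Ioo (1 - s) (1 - s * x))) ^ k := by
  refine setIntegral_eq_of_subset_of_forall_sdiff_eq_zero measurableSet_Ioi
    (fun x hx => hx.1) (fun x hx => ?_)
  have h1 : 1 < x := by
    by_contra h
    exact hx.2 ⟨hx.1, not_lt.1 h⟩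
  rw [Ioo_eq_empty]
  · simp [hk]
  · intro h
    nlinarith
/-- **Lemma 6.** If `F ∈ D(Λ)` then `σ²(s)/(2 s c(s)²) → 1` as `s ↓ 0`. -/
theorem sigmaSq_div_tendsto
    (μ : Measure ℝ) [IsProbabilityMeasure μ] (F Q : ℝ → ℝ)
    (hF : F = distFun μ) (hQ : Q = quantileFun F)
    (hD : DeHaanGumbel Q)
    (hfin : ∀ᶠ s in nhdsWithin (0:ℝ) (Set.Ioi 0),
      IntegrableOn (fun u : ℝ => 1 - u) (Set.Ioo (1 - s) 1) (dQ μ) ∧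
      (∀ v ∈ Set.Ioo (1 - s) (1:ℝ),
        IntegrableOn (fun u : ℝ => min u v - u * v) (Set.Ioo (1 - s) 1) (dQ μ)) ∧
      IntegrableOn (fun v : ℝ => ∫ u in Set.Ioo (1 - s) 1, (min u v - u * v) ∂(dQ μ))
        (Set.Ioo (1 - s) 1) (dQ μ) ∧
      0 < cFun μ s) :
    Tendsto (fun s : ℝ => sigmaSq μ s / (2 * s * (cFun μ s) ^ 2))
      (nhdsWithin 0 (Set.Ioi 0)) (nhds 1) := by
  subst hF
  subst hQ
  have hlt : ∀ᶠ s in nhdsWithin (0:ℝ) (Ioi 0), s ∈ Ioo (0:ℝ) 1 :=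
    Ioo_mem_nhdsGT zero_lt_one
  have hl2 : 0 < Real.log 2 := Real.log_pos one_lt_two
  have hlh : Real.log (1/2) = - Real.log 2 := by rw [one_div, Real.log_inv]
  have hl4 : Real.log (1/4) = - (2 * Real.log 2) := by
    rw [one_div, Real.log_inv, show (4:ℝ) = 2 ^ 2 by norm_num, Real.log_pow]; norm_num
  have hpos : ∀ᶠ s in nhdsWithin (0:ℝ) (Ioi 0), 0 < quantileFun (distFun μ) (1 - s * (1/2))
      - quantileFun (distFun μ) (1 - s * 1) := by
    have hd := hD (1/2) (1/2) 1 1 (by norm_num) (by norm_num) one_pos one_pos (by norm_num)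
    rw [div_self (by rw [hlh, Real.log_one]; linarith)] at hd
    filter_upwards [hd.eventually (lt_mem_nhds zero_lt_one), hlt] with s h1 h2
    have h3 := h2.1
    have h4 := h2.2
    refine lt_of_le_of_ne ?_ ?_
    · linarith [aux_mono_s6 μ (a := 1 - s * 1) (b := 1 - s * (1/2)) (by linarith) (by linarith)
        (by linarith)]
    · intro h
      rw [← h] at h1
      simp at h1
  have hpt := aux_pt μ hD hpos
  -- Potter bound
  obtain ⟨C, hC0, hbd⟩ : ∃ C : ℝ, 0 ≤ C ∧ ∀ᶠ s in nhdsWithin (0:ℝ) (Ioi 0), ∀ x ∈ Ioc (0:ℝ) 1,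
      (dQ μ).real (Ioo (1 - s) (1 - s * x)) /
      (quantileFun (distFun μ) (1 - s * (1/2)) - quantileFun (distFun μ) (1 - s * 1))
      ≤ C * x ^ (-(1/4) : ℝ) := by
    obtain ⟨θ, hθ⟩ : ∃ θ : ℝ, θ = (2:ℝ) ^ (-(1/4) : ℝ) := ⟨_, rfl⟩
    have hθ0 : 0 < θ := by rw [hθ]; positivity
    have hθ1 : θ < 1 := by
      rw [hθ]; exact Real.rpow_lt_one_of_one_lt_of_neg one_lt_two (by norm_num)
    have hd := hD (1/4) (1/2) (1/2) 1 (by norm_num) (by norm_num) (by norm_num) one_pos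
      (by norm_num)
    have hone : (Real.log (1/4) - Real.log (1/2)) / (Real.log (1/2) - Real.log 1) = 1 := by
      rw [hlh, hl4, Real.log_one, div_eq_one_iff_eq (by linarith)]
      ring
    rw [hone] at hd
    have hlam : 1 < ((1 + θ) / 2) / θ := by
      rw [lt_div_iff₀ hθ0]; linarith
    have hev := (hd.eventually (gt_mem_nhds hlam)).and (hpos.and hlt)
    obtain ⟨s0, hs0, hsub⟩ := mem_nhdsGT_iff_exists_Ioo_subset.1 hev
    have hP := aux_potter_s6 (quantileFun (distFun μ)) (min s0 1) (((1 + θ) / 2) / θ) θ ((1 + θ) / 2)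
      hθ (by linarith) (by linarith) (by field_simp)
      (by
        intro t s h1 h2 h3
        have := lt_min_iff.1 h3
        exact aux_mono_s6 μ (by linarith) (by linarith) (by linarith))
      (by
        intro s h1 h2
        have h3 := hsub ⟨h1, (lt_min_iff.1 h2).1⟩
        have h4 := h3.1
        have h5 := h3.2.1
        exact ((div_lt_iff₀ h5).1 h4).le)
    refine ⟨1 / (1 - (1 + θ) / 2), ?_, ?_⟩
    · apply div_nonneg zero_le_one; linarith
    have hs01 : 0 < min s0 1 := lt_min hs0 one_pos
    filter_upwards [hpos, Ioo_mem_nhdsGT hs01] with s hg hs x hx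
    obtain ⟨n, hn⟩ := exists_pow_lt_of_lt_one hx.1 (show (1/2 : ℝ) < 1 by norm_num)
    have h1 := hP n x hn.le hx.2 s hs.1 hs.2
    have h2 := (lt_min_iff.1 hs.2).2
    have h3 := hs.1
    have h6 := hx.1
    have h7 := hx.2
    have h5 := aux_Ioo_le μ (a := 1 - s) (b := 1 - s * x) (by linarith) (by nlinarith)
      (by nlinarith)
    rw [div_le_iff₀ hg]
    linarith
  have hmeas : ∀ᶠ s in nhdsWithin (0:ℝ) (Ioi 0), Measurable (fun x : ℝ =>
      (dQ μ).real (Ioo (1 - s) (1 - s * x)) /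
      (quantileFun (distFun μ) (1 - s * (1/2)) - quantileFun (distFun μ) (1 - s * 1))) := by
    filter_upwards [hlt] with s hs
    exact (aux_meas μ s hs.1).div_const _
  have hint : ∀ r : ℝ, -1 < r → IntegrableOn (fun x : ℝ => x ^ r) (Ioc 0 1) := fun r hr =>
    (intervalIntegrable_iff_integrableOn_Ioc_of_le zero_le_one).1
      (intervalIntegral.intervalIntegrable_rpow' hr)
  have hJ1 : Tendsto (fun s : ℝ => ∫ x in Ioc (0:ℝ) 1, (dQ μ).real (Ioo (1 - s) (1 - s * x)) /
      (quantileFun (distFun μ) (1 - s * (1/2)) - quantileFun (distFun μ) (1 - s * 1)))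
      (nhdsWithin 0 (Ioi 0)) (nhds ((Real.log 2)⁻¹)) := by
    rw [← aux_log_int]
    refine tendsto_integral_filter_of_dominated_convergence (fun x => C * x ^ (-(1/4) : ℝ))
      ?_ ?_ ((hint _ (by norm_num)).const_mul C) ?_
    · filter_upwards [hmeas] with s hs using hs.aestronglyMeasurable
    · filter_upwards [hbd, hpos] with s hs hg
      filter_upwards [ae_restrict_mem measurableSet_Ioc] with x hx
      rw [Real.norm_of_nonneg (div_nonneg measureReal_nonneg hg.le)]
      exact hs x hx
    · filter_upwards [ae_restrict_mem measurableSet_Ioc] with x hx using hpt x hx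
  have hJ2 : Tendsto (fun s : ℝ => ∫ x in Ioc (0:ℝ) 1, ((dQ μ).real (Ioo (1 - s) (1 - s * x)) /
      (quantileFun (distFun μ) (1 - s * (1/2)) - quantileFun (distFun μ) (1 - s * 1))) ^ 2)
      (nhdsWithin 0 (Ioi 0)) (nhds (2 * ((Real.log 2)⁻¹) ^ 2)) := by
    rw [← aux_logsq_int]
    refine tendsto_integral_filter_of_dominated_convergence (fun x => C ^ 2 * x ^ (-(1/2) : ℝ))
      ?_ ?_ ((hint _ (by norm_num)).const_mul (C ^ 2)) ?_
    · filter_upwards [hmeas] with s hs using (hs.pow_const 2).aestronglyMeasurable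
    · filter_upwards [hbd, hpos] with s hs hg
      filter_upwards [ae_restrict_mem measurableSet_Ioc] with x hx
      rw [Real.norm_of_nonneg (sq_nonneg _)]
      have h1 := pow_le_pow_left₀ (div_nonneg measureReal_nonneg hg.le) (hs x hx) 2
      refine h1.trans (le_of_eq ?_)
      rw [mul_pow, ← Real.rpow_natCast (x ^ (-(1/4) : ℝ)), ← Real.rpow_mul hx.1.le]
      norm_num
    · filter_upwards [ae_restrict_mem measurableSet_Ioc] with x hx using (hpt x hx).pow 2
  have hid : Tendsto (fun s : ℝ => s / 2) (nhdsWithin 0 (Ioi 0)) (nhds 0) := by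
    have : Tendsto (fun s : ℝ => s / 2) (nhds 0) (nhds (0 / 2)) := tendsto_id.div_const 2
    rw [zero_div] at this
    exact this.mono_left nhdsWithin_le_nhds
  have hlim := (hJ2.div ((hJ1.pow 2).const_mul 2) (by positivity)).sub hid
  rw [div_self (by positivity), sub_zero] at hlim
  refine hlim.congr' ?_
  filter_upwards [hfin, hlt, hpos] with s ⟨hi1, hi2, hi3, hc⟩ hs hg
  have hs0 := hs.1
  have hsig := aux_sigma μ hs.1 hs.2 hi1 hi2 hi3
  have hcf := aux_cFun μ hs.1 hi1
  have r1 := aux_restrict μ s hs.1 1 one_ne_zero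
  simp only [pow_one] at r1
  rw [r1] at hcf
  rw [aux_restrict μ s hs.1 2 two_ne_zero] at hsig
  simp only [Pi.div_apply, div_pow]
  rw [integral_div, integral_div, ← hcf, hsig]
  generalize quantileFun (distFun μ) (1 - s * (1/2)) - quantileFun (distFun μ) (1 - s * 1) = g
    at hg ⊢
  generalize cFun μ s = c at hc ⊢
  generalize ∫ x in Ioc (0:ℝ) 1, ((dQ μ).real (Ioo (1 - s) (1 - s * x))) ^ 2 = J
  field_simp
end
end
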